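/- Let φ = (−e^{−πi/9}|0⟩ + e^{πi/9}|2⟩)/√2 ∈ ℂ³, let R_φ = I − 2|φ⟩⟨φ| be the Householder reflection about φ, and let τ = |2⟩⟨0| + |1⟩⟨1| + |0⟩⟨2| be the permutation operator exchanging |0⟩ and |2⟩. Then R_φ·τ = P₉, where P₉ = e^{−2πi/9}|0⟩⟨0| + |1⟩⟨1| + e^{2πi/9}|2⟩⟨2|. In particular, P₉ is the product of a basis transposition and a two-level Householder reflection. -/

import Mathlib

/-! The vector `φ` is obtained from `(|2⟩ − |0⟩)/√2` by the diagonal unitary `D` with entries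
`e^{−πi/9}, 1, e^{πi/9}`. The reflection about `(|2⟩ − |0⟩)/√2` is the transposition `τ` itself, so
conjugating by `D` gives `R_φ = D τ D*`. Conjugation by `τ` exchanges the outer entries of `D*` and
thus turns `D*` into `D`; hence `R_φ τ = D (τ D* τ) = D² = P₉`. -/

open Matrix

/-- The state `φ = (−e^{−πi/9}|0⟩ + e^{πi/9}|2⟩)/√2`. -/
noncomputable def phiVec : Fin 3 → ℂ :=
  ((Real.sqrt 2 : ℂ))⁻¹ •
    ![-Complex.exp (-(Real.pi : ℂ) * Complex.I / 9), 0,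
      Complex.exp ((Real.pi : ℂ) * Complex.I / 9)]

/-- The Householder reflection `R_φ = I − 2|φ⟩⟨φ|` as a matrix. -/
noncomputable def Rphi : Matrix (Fin 3) (Fin 3) ℂ :=
  1 - (2 : ℂ) • Matrix.vecMulVec phiVec (star phiVec)

/-- The transposition `τ = |2⟩⟨0| + |1⟩⟨1| + |0⟩⟨2|` exchanging `|0⟩` and `|2⟩`. -/
def tau02 : Matrix (Fin 3) (Fin 3) ℂ :=
  ![![0, 0, 1], ![0, 1, 0], ![1, 0, 0]]

/-- The diagonal gate `P₉ = e^{−2πi/9}|0⟩⟨0| + |1⟩⟨1| + e^{2πi/9}|2⟩⟨2|`. -/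
noncomputable def P9 : Matrix (Fin 3) (Fin 3) ℂ :=
  Matrix.diagonal
    ![Complex.exp (-(2 * (Real.pi : ℂ) * Complex.I) / 9), 1,
      Complex.exp (2 * (Real.pi : ℂ) * Complex.I / 9)]

theorem swap_mul_diagonal_mul_swap {n R : Type*} [DecidableEq n] [Fintype n] [NonAssocSemiring R]
    (i j : n) (d : n → R) :
    swap R i j * diagonal d * swap R i j = diagonal (d ∘ Equiv.swap i j) := by
  rw [swap, Equiv.Perm.permMatrix, PEquiv.toMatrix_toPEquiv_mul, PEquiv.mul_toMatrix_toPEquiv,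
    submatrix_submatrix, Equiv.symm_swap]
  exact submatrix_diagonal_equiv d (Equiv.swap i j)

section Householder

variable {n R : Type*} [DecidableEq n] [Ring R] [StarRing R]

/-- The Householder reflection `I − 2|u⟩⟨u|` about `u`, generalizing `Rphi`. The vector `u` is
not required to be a unit vector; the matrix is an involution when `⟨u|u⟩ = 1`. -/
def householder (u : n → R) : Matrix n n R :=
  1 - (2 : R) • vecMulVec u (star u)

theorem householder_single_sub_single (i j : n) {s : R} (hs : 2 * (s * star s) = 1) :
    householder (Pi.single j s - Pi.single i s) = swap R i j := by
  have two_smul_vecMulVec_single (k l : n) :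
      (2 : R) • vecMulVec (Pi.single k s) (Pi.single l (star s)) =
        (PEquiv.single k l).toMatrix := by
    ext a b
    simp only [PEquiv.toMatrix_apply, PEquiv.mem_single_iff]
    by_cases ha : a = k <;> by_cases hb : b = l <;> simp [ha, hb, hs, vecMulVec_apply]
  rw [householder, swap, Equiv.Perm.permMatrix, PEquiv.toMatrix_swap]
  simp only [star_sub, Pi.star_single, vecMulVec_sub, sub_vecMulVec, smul_sub,
    two_smul_vecMulVec_single]
  abel

variable [Fintype n]

theorem householder_mulVec {U : Matrix n n R} (hU : U * Uᴴ = 1) (u : n → R) :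
    householder (U *ᵥ u) = U * householder u * Uᴴ := by
  have vecMulVec_conj : vecMulVec (U *ᵥ u) (star (U *ᵥ u)) = U * vecMulVec u (star u) * Uᴴ := by
    rw [star_mulVec, ← mul_vecMulVec, ← vecMulVec_mul, Matrix.mul_assoc]
  simp only [householder, two_smul, vecMulVec_conj, mul_sub, sub_mul, mul_add, add_mul, mul_one, hU]

theorem householder_diagonal_mulVec_mul_swap (i j : n) {s : R} (hs : 2 * (s * star s) = 1)
    {d : n → R} (hd : d * star d = 1) :
    householder (diagonal d *ᵥ (Pi.single j s - Pi.single i s)) * swap R i j =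
      diagonal (d * (star d ∘ Equiv.swap i j)) := by
  have diagonal_unitary : diagonal d * (diagonal d)ᴴ = 1 := by
    rw [diagonal_conjTranspose, diagonal_mul_diagonal']
    exact (congrArg diagonal hd).trans diagonal_one
  calc householder (diagonal d *ᵥ (Pi.single j s - Pi.single i s)) * swap R i j
      = diagonal d * (swap R i j * diagonal (star d) * swap R i j) := by
        rw [householder_mulVec diagonal_unitary, householder_single_sub_single i j hs,
          diagonal_conjTranspose]
        simp only [Matrix.mul_assoc]
    _ = diagonal (d * (star d ∘ Equiv.swap i j)) := by
        rw [swap_mul_diagonal_mul_swap, diagonal_mul_diagonal']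
        rfl

end Householder

section Phases

variable {n : Type*}

/-- The vector of phases `e^{iθ_k}`, the diagonal of the phase gate with angles `θ`. -/
noncomputable def phases (θ : n → ℝ) : n → ℂ :=
  fun k ↦ Complex.exp (θ k * Complex.I)

theorem phases_zero : phases (0 : n → ℝ) = 1 := by
  ext k
  simp [phases]

theorem phases_add (θ η : n → ℝ) : phases (θ + η) = phases θ * phases η := by
  ext k
  simp [phases, add_mul, Complex.exp_add]

theorem star_phases (θ : n → ℝ) : star (phases θ) = phases (-θ) := by
  ext k
  simp [phases, ← Complex.exp_conj]

theorem phases_mul_star (θ : n → ℝ) : phases θ * star (phases θ) = 1 := by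
  rw [star_phases, ← phases_add, add_neg_cancel, phases_zero]

theorem householder_phases_mul_swap [DecidableEq n] [Fintype n] (i j : n) {s : ℂ}
    (hs : 2 * (s * star s) = 1) (θ : n → ℝ) :
    householder (diagonal (phases θ) *ᵥ (Pi.single j s - Pi.single i s)) * swap ℂ i j =
      diagonal (phases (θ - θ ∘ Equiv.swap i j)) := by
  rw [householder_diagonal_mulVec_mul_swap i j hs (phases_mul_star θ), star_phases,
    sub_eq_add_neg, phases_add]
  rfl

end Phases

theorem tau02_eq_swap : tau02 = swap ℂ 0 2 := by
  ext i j
  fin_cases i <;> fin_cases j <;> simp [tau02, swap, PEquiv.toMatrix_apply, Equiv.swap_apply_def]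

theorem phiVec_eq_diagonal_phases_mulVec :
    phiVec = diagonal (phases ![-(Real.pi / 9), 0, Real.pi / 9]) *ᵥ
      (Pi.single 2 (Real.sqrt 2 : ℂ)⁻¹ - Pi.single 0 (Real.sqrt 2 : ℂ)⁻¹) := by
  ext k
  fin_cases k <;> simp [phiVec, phases, mulVec_diagonal] <;> ring_nf

theorem P9_eq_diagonal_phases :
    P9 = diagonal (phases ![-(2 * Real.pi / 9), 0, 2 * Real.pi / 9]) := by
  refine congrArg diagonal (funext fun k ↦ ?_)
  fin_cases k <;> simp [phases] <;> ring_nf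

theorem two_mul_inv_sqrt_two_mul_star :
    2 * ((Real.sqrt 2 : ℂ)⁻¹ * star (Real.sqrt 2 : ℂ)⁻¹) = 1 := by
  have sqrt_two_mul_self : (Real.sqrt 2 : ℂ) * Real.sqrt 2 = 2 := by
    rw [← Complex.ofReal_mul, Real.mul_self_sqrt zero_le_two, Complex.ofReal_ofNat]
  rw [star_inv₀, ← starRingEnd_apply, Complex.conj_ofReal, ← mul_inv, sqrt_two_mul_self,
    mul_inv_cancel₀ two_ne_zero]

/-- `R_φ·τ = P₉`: the `P₉` gate is the product of a basis transposition and
the two-level Householder reflection about `φ`. -/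
theorem Rphi_mul_tau_eq_P9 : Rphi * tau02 = P9 := by
  let θ : Fin 3 → ℝ := ![-(Real.pi / 9), 0, Real.pi / 9]
  have angles : θ - θ ∘ Equiv.swap 0 2 = ![-(2 * Real.pi / 9), 0, 2 * Real.pi / 9] := by
    ext k
    fin_cases k <;> simp [θ, Equiv.swap_apply_def] <;> ring
  calc Rphi * tau02 = householder phiVec * swap ℂ 0 2 := by rw [Rphi, tau02_eq_swap, householder]
    _ = diagonal (phases (θ - θ ∘ Equiv.swap 0 2)) := by
        rw [phiVec_eq_diagonal_phases_mulVec,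
          householder_phases_mul_swap 0 2 two_mul_inv_sqrt_two_mul_star θ]
    _ = P9 := by rw [angles, P9_eq_diagonal_phases]
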